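/- Under the symbolwise construction (Context B), for all n ≥ 1: P_n^e = Pr{(X^n, Y^n) ∉ 𝒜_n*}, H(S^n|X^n) = H(S^n|Y^n) = H(S^n) = n·H(S), and I(X^n;Y^n) = n·ℓ; moreover lim_{n→∞} P_n^e = 0 and liminf_{n→∞} min{ −(1/n) log₂ P_n^X , −(1/n) log₂ P_n^Y } ≥ ℓ, so the sequence {(φ_n*, ψ_n*)}_{n≥1} asymptotically realizes a (2,2)-threshold scheme with correlation level ℓ. -/

import Mathlib

open Finset Filter Real
open scoped BigOperators

noncomputable section

/-- `p` is a probability mass function on a finite type. -/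
def IsPMF {α : Type*} [Fintype α] (p : α → ℝ) : Prop :=
  (∀ a, 0 ≤ p a) ∧ ∑ a, p a = 1

open scoped Classical in
/-- The distribution (pushforward pmf) of a random variable `X`
defined on a finite sample space carrying the pmf `p`. -/
def distOf {Ω α : Type*} [Fintype Ω] (p : Ω → ℝ) (X : Ω → α) (x : α) : ℝ :=
  ∑ ω ∈ Finset.univ.filter fun ω => X ω = x, p ω

/-- Base-2 Shannon entropy of a pmf on a finite type
(the convention `0 · log₂ 0 = 0` holds since `Real.logb 2 0 = 0`). -/
def ent {α : Type*} [Fintype α] (q : α → ℝ) : ℝ :=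
  -∑ x, q x * Real.logb 2 (q x)

/-- Base-2 entropy `H(X)` of a random variable `X` under pmf `p`. -/
def entRV {Ω α : Type*} [Fintype Ω] [Fintype α] (p : Ω → ℝ) (X : Ω → α) : ℝ :=
  ent (distOf p X)

/-- Base-2 conditional entropy `H(X|Y) = H(X,Y) − H(Y)`. -/
def condEnt {Ω α β : Type*} [Fintype Ω] [Fintype α] [Fintype β]
    (p : Ω → ℝ) (X : Ω → α) (Y : Ω → β) : ℝ :=
  entRV p (fun ω => (X ω, Y ω)) - entRV p Y

/-- Base-2 mutual information `I(X;Y) = H(X) + H(Y) − H(X,Y)`. -/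
def MI {Ω α β : Type*} [Fintype Ω] [Fintype α] [Fintype β]
    (p : Ω → ℝ) (X : Ω → α) (Y : Ω → β) : ℝ :=
  entRV p X + entRV p Y - entRV p (fun ω => (X ω, Y ω))

/-- `X` and `Y` are independent random variables under the pmf `p`. -/
def IndepRV {Ω α β : Type*} [Fintype Ω] (p : Ω → ℝ) (X : Ω → α) (Y : Ω → β) : Prop :=
  ∀ a b, distOf p (fun ω => (X ω, Y ω)) (a, b) = distOf p X a * distOf p Y b

variable {𝒮 𝒳 𝒴 : Type}

/-- Single-letter sample-space pmf on `𝒮 × 𝒰`: the secret `S ~ PS` and an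
independent uniform random number `U` on `𝒰`. -/
def p1 (PS : 𝒮 → ℝ) (𝒰 : Type) [Fintype 𝒰] : 𝒮 × 𝒰 → ℝ :=
  fun su => PS su.1 / (Fintype.card 𝒰 : ℝ)

/-- The i.i.d. `n`-fold sample-space pmf on `Fin n → 𝒮 × 𝒰`. -/
def pn (PS : 𝒮 → ℝ) (𝒰 : Type) [Fintype 𝒰] (n : ℕ) :
    (Fin n → 𝒮 × 𝒰) → ℝ :=
  fun ω => ∏ i, p1 PS 𝒰 (ω i)

/-- The secret word `Sⁿ` as a random variable. -/
def SnB (𝒰 : Type) (n : ℕ) : (Fin n → 𝒮 × 𝒰) → (Fin n → 𝒮) :=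
  fun ω i => (ω i).1

/-- The first share `Xⁿ` produced by the symbolwise encoder `φₙ*`. -/
def XnB (f : 𝒮 × 𝒰 → 𝒳 × 𝒴) (n : ℕ) : (Fin n → 𝒮 × 𝒰) → (Fin n → 𝒳) :=
  fun ω i => (f (ω i)).1

/-- The second share `Yⁿ` produced by the symbolwise encoder `φₙ*`. -/
def YnB (f : 𝒮 × 𝒰 → 𝒳 × 𝒴) (n : ℕ) : (Fin n → 𝒮 × 𝒰) → (Fin n → 𝒴) :=
  fun ω i => (f (ω i)).2

open scoped Classical in
/-- The acceptance region `𝒜ₙ*`: pairs of positive probability whose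
normalized information density exceeds `ℓ − γₙ`. -/
def AccB [Fintype 𝒮] [Fintype 𝒳] [Fintype 𝒴]
    (PS : 𝒮 → ℝ) (𝒰 : Type) [Fintype 𝒰] (f : 𝒮 × 𝒰 → 𝒳 × 𝒴)
    (ℓ : ℝ) (γ : ℕ → ℝ) (n : ℕ) : Finset ((Fin n → 𝒳) × (Fin n → 𝒴)) :=
  Finset.univ.filter fun xy =>
    0 < distOf (pn PS 𝒰 n) (XnB f n) xy.1 * distOf (pn PS 𝒰 n) (YnB f n) xy.2 ∧
    ℓ - γ n < Real.logb 2
        (distOf (pn PS 𝒰 n) (fun ω => (XnB f n ω, YnB f n ω)) xy /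
          (distOf (pn PS 𝒰 n) (XnB f n) xy.1 *
            distOf (pn PS 𝒰 n) (YnB f n) xy.2)) / (n : ℝ)

open scoped Classical in
/-- The symbolwise application `gₙ` of the single-letter decoder `g`. -/
def gnB (g : 𝒳 × 𝒴 → Option 𝒮) (n : ℕ)
    (xy : (Fin n → 𝒳) × (Fin n → 𝒴)) : Option (Fin n → 𝒮) :=
  if h : ∀ i, (g (xy.1 i, xy.2 i)).isSome then
    some (fun i => (g (xy.1 i, xy.2 i)).get (h i))
  else none

open scoped Classical in
/-- The decoder `ψₙ*`: decode symbolwise inside `𝒜ₙ*`, declare `⊥` outside. -/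
def psiB [Fintype 𝒮] [Fintype 𝒳] [Fintype 𝒴]
    (PS : 𝒮 → ℝ) (𝒰 : Type) [Fintype 𝒰] (f : 𝒮 × 𝒰 → 𝒳 × 𝒴)
    (g : 𝒳 × 𝒴 → Option 𝒮) (ℓ : ℝ) (γ : ℕ → ℝ) (n : ℕ)
    (xy : (Fin n → 𝒳) × (Fin n → 𝒴)) : Option (Fin n → 𝒮) :=
  if xy ∈ AccB PS 𝒰 f ℓ γ n then gnB g n xy else none

open scoped Classical in
/-- The decoding error probability `Pₙᵉ = Pr{ψₙ*(φₙ*(Sⁿ,Uⁿ)) ≠ Sⁿ}`. -/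
def PeB [Fintype 𝒮] [Fintype 𝒳] [Fintype 𝒴]
    (PS : 𝒮 → ℝ) (𝒰 : Type) [Fintype 𝒰] (f : 𝒮 × 𝒰 → 𝒳 × 𝒴)
    (g : 𝒳 × 𝒴 → Option 𝒮) (ℓ : ℝ) (γ : ℕ → ℝ) (n : ℕ) : ℝ :=
  ∑ ω ∈ Finset.univ.filter (fun ω : Fin n → 𝒮 × 𝒰 =>
      psiB PS 𝒰 f g ℓ γ n (XnB f n ω, YnB f n ω) ≠ some (SnB 𝒰 n ω)),
    pn PS 𝒰 n ω

/-- `Pₙˣ`: maximal success probability of impersonating participant 1. -/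
def PimpXB [Fintype 𝒮] [Fintype 𝒳] [Fintype 𝒴]
    (PS : 𝒮 → ℝ) (𝒰 : Type) [Fintype 𝒰] (f : 𝒮 × 𝒰 → 𝒳 × 𝒴)
    (ℓ : ℝ) (γ : ℕ → ℝ) (n : ℕ) : ℝ :=
  ⨆ Q : {Q : (Fin n → 𝒳) → ℝ // IsPMF Q},
    ∑ xy ∈ AccB PS 𝒰 f ℓ γ n, Q.1 xy.1 * distOf (pn PS 𝒰 n) (YnB f n) xy.2

/-- `Pₙʸ`: maximal success probability of impersonating participant 2. -/
def PimpYB [Fintype 𝒮] [Fintype 𝒳] [Fintype 𝒴]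
    (PS : 𝒮 → ℝ) (𝒰 : Type) [Fintype 𝒰] (f : 𝒮 × 𝒰 → 𝒳 × 𝒴)
    (ℓ : ℝ) (γ : ℕ → ℝ) (n : ℕ) : ℝ :=
  ⨆ Q : {Q : (Fin n → 𝒴) → ℝ // IsPMF Q},
    ∑ xy ∈ AccB PS 𝒰 f ℓ γ n, distOf (pn PS 𝒰 n) (XnB f n) xy.1 * Q.1 xy.2

open scoped Classical in
lemma distOf_eq {Ω α : Type*} [Fintype Ω] (p : Ω → ℝ) (X : Ω → α) (x : α) :
    distOf p X x = ∑ ω, if X ω = x then p ω else 0 := by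
  unfold distOf
  rw [Finset.sum_filter]

lemma distOf_nonneg {Ω α : Type*} [Fintype Ω] (p : Ω → ℝ) (hp : ∀ a, 0 ≤ p a) (X : Ω → α)
    (x : α) : 0 ≤ distOf p X x := by
  unfold distOf
  exact Finset.sum_nonneg fun _ _ => hp _

lemma le_distOf {Ω α : Type*} [Fintype Ω] (p : Ω → ℝ) (hp : ∀ a, 0 ≤ p a) (X : Ω → α)
    (ω : Ω) : p ω ≤ distOf p X (X ω) := by
  unfold distOf
  exact Finset.single_le_sum (f := p) (fun _ _ => hp _) (by simp)

lemma sum_distOf_mul {Ω α : Type*} [Fintype Ω] [Fintype α] (p : Ω → ℝ) (X : Ω → α)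
    (h : α → ℝ) : ∑ x, distOf p X x * h x = ∑ ω, p ω * h (X ω) := by
  classical
  simp only [distOf_eq, Finset.sum_mul, ite_mul, zero_mul]
  rw [Finset.sum_comm]
  simp

lemma sum_distOf {Ω α : Type*} [Fintype Ω] [Fintype α] (p : Ω → ℝ) (X : Ω → α) :
    ∑ x, distOf p X x = ∑ ω, p ω := by
  simpa using sum_distOf_mul p X (fun _ => 1)

lemma isPMF_distOf {Ω α : Type*} [Fintype Ω] [Fintype α] (p : Ω → ℝ) (hp : IsPMF p)
    (X : Ω → α) : IsPMF (distOf p X) :=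
  ⟨distOf_nonneg p hp.1 X, by rw [sum_distOf]; exact hp.2⟩

/-- marginalisation of a joint distribution -/
lemma sum_distOf_pair_right {Ω α β : Type*} [Fintype Ω] [Fintype β] (p : Ω → ℝ)
    (X : Ω → α) (Y : Ω → β) (x : α) :
    ∑ y, distOf p (fun ω => (X ω, Y ω)) (x, y) = distOf p X x := by
  classical
  simp only [distOf_eq, Prod.mk.injEq]
  rw [Finset.sum_comm]
  refine Finset.sum_congr rfl fun ω _ => ?_
  by_cases h : X ω = x <;> simp [h]

lemma sum_distOf_pair_left {Ω α β : Type*} [Fintype Ω] [Fintype α] (p : Ω → ℝ)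
    (X : Ω → α) (Y : Ω → β) (y : β) :
    ∑ x, distOf p (fun ω => (X ω, Y ω)) (x, y) = distOf p Y y := by
  classical
  simp only [distOf_eq, Prod.mk.injEq]
  rw [Finset.sum_comm]
  refine Finset.sum_congr rfl fun ω _ => ?_
  by_cases h : Y ω = y <;> simp [h]

/-- n-fold product of a weight function -/
def iidp {Ω : Type*} (p : Ω → ℝ) (n : ℕ) : (Fin n → Ω) → ℝ := fun ω => ∏ i, p (ω i)

lemma distOf_iidp {Ω α : Type*} [Fintype Ω] (p : Ω → ℝ) (F : Ω → α) (n : ℕ)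
    (x : Fin n → α) :
    distOf (iidp p n) (fun ω i => F (ω i)) x = ∏ i, distOf p F (x i) := by
  classical
  simp only [distOf_eq]
  rw [Finset.prod_univ_sum, Fintype.piFinset_univ]
  refine Finset.sum_congr rfl fun ω _ => ?_
  rw [Finset.prod_ite_zero]
  simp [funext_iff, iidp]

lemma sum_succ {Ω : Type*} [Fintype Ω] (n : ℕ) (G : (Fin (n+1) → Ω) → ℝ) :
    ∑ ω, G ω = ∑ a, ∑ ω : Fin n → Ω, G (Fin.cons a ω) := by
  rw [← (Fin.consEquiv (fun _ => Ω)).sum_comp, Fintype.sum_prod_type]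
  rfl

lemma iidp_cons {Ω : Type*} (p : Ω → ℝ) (n : ℕ) (a : Ω) (ω : Fin n → Ω) :
    iidp p (n+1) (Fin.cons a ω) = p a * iidp p n ω := by
  simp [iidp, Fin.prod_univ_succ]

lemma iidp_sum {Ω : Type*} [Fintype Ω] (p : Ω → ℝ) (hp : ∑ a, p a = 1) (n : ℕ) :
    ∑ ω, iidp p n ω = 1 := by
  induction n with
  | zero => simp [iidp]
  | succ n ih =>
    rw [sum_succ]
    simp only [iidp_cons, ← Finset.mul_sum, ih, mul_one, hp]

lemma iidp_mean {Ω : Type*} [Fintype Ω] (p : Ω → ℝ) (hp : ∑ a, p a = 1) (h : Ω → ℝ) (n : ℕ) :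
    ∑ ω, iidp p n ω * ∑ i, h (ω i) = n * ∑ a, p a * h a := by
  induction n with
  | zero => simp
  | succ n ih =>
    rw [sum_succ]
    simp only [iidp_cons, Fin.sum_univ_succ, Fin.cons_zero, Fin.cons_succ]
    have : ∀ a, ∑ ω : Fin n → Ω, p a * iidp p n ω * (h a + ∑ i, h (ω i))
        = p a * h a + p a * (n * ∑ a, p a * h a) := by
      intro a
      rw [← ih, ← mul_one (p a * h a), ← iidp_sum p hp n, Finset.mul_sum, Finset.mul_sum,
        ← Finset.sum_add_distrib]
      exact Finset.sum_congr rfl fun _ _ => by ring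
    simp only [this]
    rw [Finset.sum_add_distrib, ← Finset.sum_mul, hp]
    push_cast; ring

lemma iidp_var {Ω : Type*} [Fintype Ω] (p : Ω → ℝ) (hp : ∑ a, p a = 1) (h : Ω → ℝ)
    (h0 : ∑ a, p a * h a = 0) (n : ℕ) :
    ∑ ω, iidp p n ω * (∑ i, h (ω i))^2 = n * ∑ a, p a * (h a)^2 := by
  induction n with
  | zero => simp
  | succ n ih =>
    rw [sum_succ]
    simp only [iidp_cons, Fin.sum_univ_succ, Fin.cons_zero, Fin.cons_succ]
    have hm := iidp_mean p hp h n
    rw [h0, mul_zero] at hm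
    have : ∀ a, ∑ ω : Fin n → Ω, p a * iidp p n ω * (h a + ∑ i, h (ω i))^2
        = p a * (h a)^2 + p a * (n * ∑ a, p a * (h a)^2) := by
      intro a
      have e : ∑ ω : Fin n → Ω, p a * iidp p n ω * (h a + ∑ i, h (ω i))^2
        = p a * (h a)^2 * (∑ ω, iidp p n ω) + 2 * p a * h a * (∑ ω, iidp p n ω * ∑ i, h (ω i))
          + p a * (∑ ω, iidp p n ω * (∑ i, h (ω i))^2) := by
        rw [Finset.mul_sum, Finset.mul_sum, Finset.mul_sum, ← Finset.sum_add_distrib,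
          ← Finset.sum_add_distrib]
        exact Finset.sum_congr rfl fun _ _ => by ring
      rw [e, hm, ih, iidp_sum p hp]; ring
    simp only [this]
    rw [Finset.sum_add_distrib, ← Finset.sum_mul, hp]
    push_cast; ring

lemma ent_iidp {α : Type*} [Fintype α] (q : α → ℝ) (hq : ∑ a, q a = 1) (n : ℕ) :
    ent (iidp q n) = n * ent q := by
  unfold ent
  rw [mul_neg, ← iidp_mean q hq]
  congr 1
  refine Finset.sum_congr rfl fun x _ => ?_
  by_cases h : ∀ i, q (x i) ≠ 0
  · unfold iidp
    rw [Real.logb_prod _ _ (fun i _ => h i)]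
  · push Not at h
    obtain ⟨i, hi⟩ := h
    have : iidp q n x = 0 := Finset.prod_eq_zero (Finset.mem_univ i) hi
    simp [this]

lemma ent_equiv {α β : Type*} [Fintype α] [Fintype β] (e : α ≃ β) (q : β → ℝ) :
    ent (fun a => q (e a)) = ent q := by
  unfold ent
  rw [e.sum_comp (fun x => q x * Real.logb 2 (q x))]

lemma entRV_iidp {Ω α : Type*} [Fintype Ω] [Fintype α] (p : Ω → ℝ) (hp : ∑ a, p a = 1)
    (F : Ω → α) (n : ℕ) :
    entRV (iidp p n) (fun ω i => F (ω i)) = n * entRV p F := by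
  unfold entRV
  rw [← ent_iidp _ (by rw [sum_distOf]; exact hp)]
  congr 1
  funext x
  exact distOf_iidp p F n x

lemma distOf_iidp_pair {Ω α β : Type*} [Fintype Ω] (p : Ω → ℝ)
    (F : Ω → α) (G : Ω → β) (n : ℕ) (x : Fin n → α) (y : Fin n → β) :
    distOf (iidp p n) (fun ω => ((fun i => F (ω i)), (fun i => G (ω i)))) (x, y)
      = ∏ i, distOf p (fun ω => (F ω, G ω)) (x i, y i) := by
  rw [← distOf_iidp p (fun ω => (F ω, G ω)) n (fun i => (x i, y i))]
  classical
  simp only [distOf_eq]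
  refine Finset.sum_congr rfl fun ω _ => ?_
  simp only [Prod.mk.injEq, funext_iff, forall_and]

lemma entRV_iidp_pair {Ω α β : Type*} [Fintype Ω] [Fintype α] [Fintype β] (p : Ω → ℝ)
    (hp : ∑ a, p a = 1) (F : Ω → α) (G : Ω → β) (n : ℕ) :
    entRV (iidp p n) (fun ω => ((fun i => F (ω i)), (fun i => G (ω i))))
      = n * entRV p (fun ω => (F ω, G ω)) := by
  rw [← entRV_iidp p hp]
  unfold entRV
  rw [← ent_equiv (Equiv.arrowProdEquivProdArrow (Fin n) (fun _ => α) (fun _ => β))]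
  congr 1
  funext z
  exact (distOf_iidp_pair p F G n _ _).trans (distOf_iidp p (fun ω => (F ω, G ω)) n z).symm

lemma exists_pos_lb {α : Type*} [Fintype α] (q : α → ℝ) :
    ∃ c : ℝ, 0 < c ∧ ∀ a, 0 < q a → c ≤ q a := by
  classical
  by_cases h : (Finset.univ.filter fun a => 0 < q a).Nonempty
  · obtain ⟨a, ha, hm⟩ := Finset.exists_min_image _ q h
    exact ⟨q a, by simpa using ha, fun b hb => hm b (by simpa using hb)⟩
  · rw [Finset.not_nonempty_iff_eq_empty] at h
    refine ⟨1, one_pos, fun a ha => ?_⟩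
    have : a ∈ (Finset.univ.filter fun a => 0 < q a) := by simpa using ha
    rw [h] at this
    simp at this

lemma imp_sum_le {α β : Type*} [Fintype α] [Fintype β] [DecidableEq α] [DecidableEq β] (A : Finset (α × β)) (w : β → ℝ)
    (B : ℝ) (h : ∀ x, ∑ y, (if (x, y) ∈ A then w y else 0) ≤ B)
    (Q : α → ℝ) (hQ : IsPMF Q) : ∑ xy ∈ A, Q xy.1 * w xy.2 ≤ B := by
  have e : ∑ xy ∈ A, Q xy.1 * w xy.2 = ∑ x, Q x * ∑ y, (if (x, y) ∈ A then w y else 0) := by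
    simp only [Finset.mul_sum]
    rw [← Fintype.sum_prod_type' (f := fun x y => Q x * (if (x, y) ∈ A then w y else 0))]
    simp
  rw [e]
  calc _ ≤ ∑ x, Q x * B := Finset.sum_le_sum fun x _ => mul_le_mul_of_nonneg_left (h x) (hQ.1 x)
    _ = B := by rw [← Finset.sum_mul, hQ.2, one_mul]

/-- The impersonation exponent bounds, in abstract form. -/
lemma imp_bounds {α β : Type*} [Fintype α] [Fintype β] (A : Finset (α × β)) (w : β → ℝ)
    (hw : ∀ y, 0 ≤ w y) (B : ℝ) (hB : 0 ≤ B)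
    (h : ∀ Q : α → ℝ, IsPMF Q → ∑ xy ∈ A, Q xy.1 * w xy.2 ≤ B) :
    (⨆ Q : {Q : α → ℝ // IsPMF Q}, ∑ xy ∈ A, Q.1 xy.1 * w xy.2) ≤ B ∧
    ∀ xy ∈ A, w xy.2 ≤ ⨆ Q : {Q : α → ℝ // IsPMF Q}, ∑ xy ∈ A, Q.1 xy.1 * w xy.2 := by
  classical
  refine ⟨Real.iSup_le (fun Q => h Q.1 Q.2) hB, ?_⟩
  rintro ⟨x, y⟩ hxy
  have hQ : IsPMF (fun a : α => if a = x then (1:ℝ) else 0) :=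
    ⟨fun a => by dsimp only; split_ifs <;> norm_num, by simp⟩
  have hbdd : BddAbove (Set.range fun Q : {Q : α → ℝ // IsPMF Q} =>
      ∑ xy ∈ A, Q.1 xy.1 * w xy.2) := ⟨B, by rintro _ ⟨Q, rfl⟩; exact h Q.1 Q.2⟩
  refine le_trans ?_ (le_ciSup hbdd ⟨_, hQ⟩)
  have := Finset.single_le_sum (s := A)
    (f := fun xy : α × β => (if xy.1 = x then (1:ℝ) else 0) * w xy.2)
    (fun z _ => mul_nonneg (hQ.1 z.1) (hw z.2)) hxy
  simpa using this

/-- single-letter information density -/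
def infoD {Ω α β : Type*} [Fintype Ω] (p : Ω → ℝ) (F : Ω → α) (G : Ω → β) (ω : Ω) : ℝ :=
  Real.logb 2 (distOf p (fun ω => (F ω, G ω)) (F ω, G ω) / (distOf p F (F ω) * distOf p G (G ω)))

lemma info_mean {Ω α β : Type*} [Fintype Ω] [Fintype α] [Fintype β] (p : Ω → ℝ)
    (hp : ∀ a, 0 ≤ p a) (F : Ω → α) (G : Ω → β) :
    ∑ ω, p ω * infoD p F G ω = MI p F G := by
  unfold MI entRV ent
  rw [sum_distOf_mul p F (fun x => Real.logb 2 (distOf p F x)),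
    sum_distOf_mul p G (fun x => Real.logb 2 (distOf p G x)),
    sum_distOf_mul p (fun ω => (F ω, G ω)) (fun x => Real.logb 2 (distOf p (fun ω => (F ω, G ω)) x)),
    ← Finset.sum_neg_distrib, ← Finset.sum_neg_distrib, ← Finset.sum_add_distrib,
    sub_neg_eq_add, ← Finset.sum_add_distrib]
  refine Finset.sum_congr rfl fun ω _ => ?_
  rcases (hp ω).eq_or_lt with h | h
  · simp [← h]
  · have h1 := h.trans_le (le_distOf p hp F ω)
    have h2 := h.trans_le (le_distOf p hp G ω)
    have h3 := h.trans_le (le_distOf p hp (fun ω => (F ω, G ω)) ω)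
    unfold infoD
    rw [Real.logb_div h3.ne' (mul_pos h1 h2).ne', Real.logb_mul h1.ne' h2.ne']
    ring

lemma iidp_nonneg {Ω : Type*} (p : Ω → ℝ) (hp : ∀ a, 0 ≤ p a) (n : ℕ) (ω : Fin n → Ω) :
    0 ≤ iidp p n ω := Finset.prod_nonneg fun _ _ => hp _

lemma pos_of_iidp_pos {Ω : Type*} (p : Ω → ℝ) (hp : ∀ a, 0 ≤ p a) (n : ℕ) (ω : Fin n → Ω)
    (h : 0 < iidp p n ω) (i : Fin n) : 0 < p (ω i) := by
  refine (hp _).lt_of_ne fun h0 => h.ne' ?_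
  exact Finset.prod_eq_zero (Finset.mem_univ i) h0.symm

lemma info_iidp {Ω α β : Type*} [Fintype Ω] (p : Ω → ℝ)
    (hp : ∀ a, 0 ≤ p a) (F : Ω → α) (G : Ω → β) (n : ℕ) (ω : Fin n → Ω) (h : 0 < iidp p n ω) :
    Real.logb 2 (distOf (iidp p n) (fun ω => ((fun i => F (ω i)), (fun i => G (ω i))))
        ((fun i => F (ω i)), (fun i => G (ω i))) /
      (distOf (iidp p n) (fun ω i => F (ω i)) (fun i => F (ω i)) *
       distOf (iidp p n) (fun ω i => G (ω i)) (fun i => G (ω i)))) = ∑ i, infoD p F G (ω i) := by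
  rw [distOf_iidp_pair, distOf_iidp, distOf_iidp, ← Finset.prod_mul_distrib,
    ← Finset.prod_div_distrib]
  unfold infoD
  rw [Real.logb_prod]
  intro i _
  have h := pos_of_iidp_pos p hp n ω h i
  have h1 := h.trans_le (le_distOf p hp F (ω i))
  have h2 := h.trans_le (le_distOf p hp G (ω i))
  have h3 := h.trans_le (le_distOf p hp (fun ω => (F ω, G ω)) (ω i))
  exact (div_pos h3 (mul_pos h1 h2)).ne'

lemma cheb {Ω : Type*} [Fintype Ω] (p : Ω → ℝ) (hp : IsPMF p) (h : Ω → ℝ) (μ : ℝ)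
    (hμ : ∑ a, p a * h a = μ) (n : ℕ) (hn : 1 ≤ n) (γ : ℝ) (hγ : 0 < γ)
    (T : Finset (Fin n → Ω))
    (hT : ∀ ω ∈ T, 0 < iidp p n ω → ∑ i, h (ω i) ≤ n * (μ - γ)) :
    ∑ ω ∈ T, iidp p n ω ≤ (∑ a, p a * (h a - μ)^2) / (Real.sqrt n * γ)^2 := by
  have hn' : (0:ℝ) < n := by exact_mod_cast hn
  have hv := iidp_var p hp.2 (fun a => h a - μ)
    (by simp only [mul_sub, Finset.sum_sub_distrib, ← Finset.sum_mul, hμ, hp.2]; ring) n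
  rw [mul_pow, Real.sq_sqrt hn'.le, le_div_iff₀ (by positivity)]
  have key : (∑ ω ∈ T, iidp p n ω) * (n * γ)^2 ≤ n * ∑ a, p a * (h a - μ)^2 := by
    rw [← hv, Finset.sum_mul]
    refine le_trans ?_ (Finset.sum_le_sum_of_subset_of_nonneg (Finset.subset_univ T)
      (fun ω _ _ => mul_nonneg (iidp_nonneg p hp.1 n ω) (sq_nonneg _)))
    refine Finset.sum_le_sum fun ω hω => ?_
    rcases (iidp_nonneg p hp.1 n ω).eq_or_lt with h0 | h0
    · simp [← h0]
    · refine mul_le_mul_of_nonneg_left ?_ h0.le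
      have := hT ω hω h0
      have e : ∑ i, (h (ω i) - μ) = ∑ i, h (ω i) - n * μ := by
        simp [Finset.sum_sub_distrib]
      rw [e]
      have : n * γ ≤ -(∑ i, h (ω i) - n * μ) := by linarith
      rw [← neg_sq (∑ i, h (ω i) - n * μ)]
      gcongr
  have : (n:ℝ) * ((∑ ω ∈ T, iidp p n ω) * (n * γ^2)) ≤ n * ∑ a, p a * (h a - μ)^2 := by
    calc _ = (∑ ω ∈ T, iidp p n ω) * (n * γ)^2 := by ring
      _ ≤ _ := key
  exact le_of_mul_le_mul_left this hn'

/-- row bound for the impersonation probability -/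
lemma row_bound {α β : Type*} [Fintype β] [DecidableEq α] [DecidableEq β] (A : Finset (α × β)) (PX : α → ℝ) (w : β → ℝ)
    (J : α → β → ℝ) (hJ : ∀ x y, 0 ≤ J x y) (hJX : ∀ x, ∑ y, J x y = PX x)
    (hPX : ∀ x, 0 ≤ PX x) (B : ℝ) (hB : 0 ≤ B)
    (hA : ∀ x y, (x, y) ∈ A → 0 < PX x ∧ PX x * w y ≤ B * J x y) (x : α) :
    ∑ y, (if (x, y) ∈ A then w y else 0) ≤ B := by
  rcases (hPX x).eq_or_lt with h | h
  · rw [Finset.sum_eq_zero]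
    · exact hB
    · intro y _
      rw [if_neg]
      intro hy
      exact (hA x y hy).1.ne h
  · refine le_of_mul_le_mul_left ?_ h
    rw [Finset.mul_sum, mul_comm (PX x) B]
    nth_rw 2 [← hJX x]
    rw [Finset.mul_sum]
    refine Finset.sum_le_sum fun y _ => ?_
    split_ifs with hy
    · exact (hA x y hy).2
    · simpa using mul_nonneg hB (hJ x y)

/-- Conversion of probability bounds into exponent bounds. -/
lemma exponent_bounds (n : ℕ) (hn : 1 ≤ n) (P c r : ℝ) (hc : 0 < c) (h1 : c ^ n ≤ P)
    (h2 : P ≤ (2:ℝ) ^ (-(n * r))) :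
    r ≤ -Real.logb 2 P / n ∧ -Real.logb 2 P / n ≤ -Real.logb 2 c := by
  have hn' : (0:ℝ) < n := by exact_mod_cast hn
  have hcn : 0 < c ^ n := pow_pos hc n
  have hP : 0 < P := hcn.trans_le h1
  constructor
  · rw [le_div_iff₀ hn']
    have := (Real.logb_le_iff_le_rpow (by norm_num : (1:ℝ) < 2) hP).2 h2
    linarith
  · rw [div_le_iff₀ hn']
    have := Real.logb_le_logb_of_le (by norm_num : (1:ℝ) < 2) hcn h1
    rw [Real.logb_pow] at this
    linarith

lemma prod_pos_lb {α : Type*} [Fintype α] (q : α → ℝ) (hq : ∀ a, 0 ≤ q a) (c : ℝ) (hc : 0 < c)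
    (h : ∀ a, 0 < q a → c ≤ q a) (n : ℕ) (x : Fin n → α) (hx : 0 < iidp q n x) :
    c ^ n ≤ iidp q n x := by
  have : ∏ _i : Fin n, c ≤ ∏ i, q (x i) :=
    Finset.prod_le_prod (fun _ _ => hc.le) fun i _ => h _ (pos_of_iidp_pos q hq n x hx i)
  simpa [iidp] using this

lemma isPMF_p1 {𝒮 : Type} [Fintype 𝒮] (𝒰 : Type) [Fintype 𝒰] [Nonempty 𝒰]
    (PS : 𝒮 → ℝ) (hPS : IsPMF PS) : IsPMF (p1 PS 𝒰) := by
  have hc : (Fintype.card 𝒰 : ℝ) ≠ 0 := by exact_mod_cast Fintype.card_ne_zero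
  refine ⟨fun a => div_nonneg (hPS.1 _) (Nat.cast_nonneg _), ?_⟩
  rw [Fintype.sum_prod_type]
  simp only [p1, Finset.sum_const, Finset.card_univ, nsmul_eq_mul, mul_div_cancel₀ _ hc]
  exact hPS.2

lemma distOf_p1_fst {𝒮 : Type} [Fintype 𝒮] (𝒰 : Type) [Fintype 𝒰] [Nonempty 𝒰]
    (PS : 𝒮 → ℝ) : distOf (p1 PS 𝒰) (fun su => su.1) = PS := by
  classical
  have hc : (Fintype.card 𝒰 : ℝ) ≠ 0 := by exact_mod_cast Fintype.card_ne_zero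
  funext s
  rw [distOf_eq, Fintype.sum_prod_type]
  rw [Finset.sum_comm]
  simp only [p1, Finset.sum_ite_eq', Finset.mem_univ, if_true, Finset.sum_const, Finset.card_univ,
    nsmul_eq_mul]
  field_simp

lemma acc_bound {n : ℕ} (hn : 1 ≤ n) {J q r : ℝ} (hr : 0 < r) (hJ : 0 ≤ J) (hq : 0 < q)
    (h : r < Real.logb 2 (J / q) / n) : q ≤ (2:ℝ) ^ (-(n * r)) * J := by
  have hn' : (0:ℝ) < n := by exact_mod_cast hn
  rw [lt_div_iff₀ hn'] at h
  have hJ0 : 0 < J := by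
    refine hJ.lt_of_ne fun h0 => ?_
    rw [← h0] at h
    simp only [zero_div, Real.logb_zero] at h
    have := mul_pos hr hn'
    linarith
  have h1 := (Real.lt_logb_iff_rpow_lt (by norm_num : (1:ℝ) < 2) (div_pos hJ0 hq)).1 h
  rw [lt_div_iff₀ hq] at h1
  rw [Real.rpow_neg (by norm_num), mul_comm (n:ℝ) r, inv_mul_eq_div, le_div_iff₀ (by positivity)]
  linarith

section main
variable {𝒮 𝒳 𝒴 : Type} [Fintype 𝒮] [Fintype 𝒳] [Fintype 𝒴]
    (𝒰 : Type) [Fintype 𝒰] [Nonempty 𝒰]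
    (PS : 𝒮 → ℝ) (ℓ : ℝ)
    (f : 𝒮 × 𝒰 → 𝒳 × 𝒴) (γ : ℕ → ℝ) (n : ℕ)

lemma mem_acc (hPS : IsPMF PS) (ω : Fin n → 𝒮 × 𝒰) (h : 0 < pn PS 𝒰 n ω) :
    (XnB f n ω, YnB f n ω) ∈ AccB PS 𝒰 f ℓ γ n ↔
      ℓ - γ n < (∑ i, infoD (p1 PS 𝒰) (fun su => (f su).1) (fun su => (f su).2) (ω i)) / n := by
  have hp := isPMF_p1 𝒰 PS hPS
  have hpn : ∀ ω, 0 ≤ pn PS 𝒰 n ω := iidp_nonneg (p1 PS 𝒰) hp.1 n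
  rw [← info_iidp (p1 PS 𝒰) hp.1 _ _ n ω h]
  unfold AccB
  rw [Finset.mem_filter]
  constructor
  · exact fun hh => hh.2.2
  · intro hh
    refine ⟨Finset.mem_univ _, mul_pos (h.trans_le (le_distOf _ hpn _ _))
      (h.trans_le (le_distOf _ hpn _ _)), hh⟩

open scoped Classical in
lemma PeB_eq (hPS : IsPMF PS) (g : 𝒳 × 𝒴 → Option 𝒮)
    (hg : ∀ s u, 0 < PS s → g (f (s, u)) = some s) :
    PeB PS 𝒰 f g ℓ γ n =
        ∑ ω ∈ Finset.univ.filter (fun ω : Fin n → 𝒮 × 𝒰 =>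
          (XnB f n ω, YnB f n ω) ∉ AccB PS 𝒰 f ℓ γ n), pn PS 𝒰 n ω := by
  have hp := isPMF_p1 𝒰 PS hPS
  unfold PeB
  rw [Finset.sum_filter, Finset.sum_filter]
  refine Finset.sum_congr rfl fun ω _ => ?_
  rcases (iidp_nonneg (p1 PS 𝒰) hp.1 n ω).eq_or_lt with h | h
  · have : pn PS 𝒰 n ω = 0 := h.symm
    simp [this]
  · have hi : ∀ i, g ((f (ω i)).1, (f (ω i)).2) = some (ω i).1 := by
      intro i
      refine hg (ω i).1 (ω i).2 ?_
      have := pos_of_iidp_pos _ hp.1 n ω h i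
      refine (hPS.1 _).lt_of_ne fun h0 => this.ne' ?_
      simp [p1, ← h0]
    have hgn : gnB g n (XnB f n ω, YnB f n ω) = some (SnB 𝒰 n ω) := by
      unfold gnB
      rw [dif_pos (fun i => by simp [XnB, YnB, hi i])]
      congr 1
      funext i
      simp [XnB, YnB, SnB, hi i]
    by_cases hA : (XnB f n ω, YnB f n ω) ∈ AccB PS 𝒰 f ℓ γ n
    · simp [psiB, hA, hgn]
    · simp [psiB, hA]

open scoped Classical in
lemma err_le (hPS : IsPMF PS) (hn : 1 ≤ n) (hγ : 0 < γ n)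
    (hMI : MI (p1 PS 𝒰) (fun su => (f su).1) (fun su => (f su).2) = ℓ) :
    ∑ ω ∈ Finset.univ.filter (fun ω : Fin n → 𝒮 × 𝒰 =>
          (XnB f n ω, YnB f n ω) ∉ AccB PS 𝒰 f ℓ γ n), pn PS 𝒰 n ω ≤
      (∑ a, p1 PS 𝒰 a * (infoD (p1 PS 𝒰) (fun su => (f su).1) (fun su => (f su).2) a - ℓ)^2)
        / (Real.sqrt n * γ n)^2 := by
  have hp := isPMF_p1 𝒰 PS hPS
  have hn' : (0:ℝ) < n := by exact_mod_cast hn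
  refine cheb (p1 PS 𝒰) hp _ ℓ ((info_mean _ hp.1 _ _).trans hMI) n hn (γ n) hγ _ ?_
  intro ω hω h
  rw [Finset.mem_filter, mem_acc 𝒰 PS ℓ f γ n hPS ω h, not_lt, div_le_iff₀ hn'] at hω
  linarith [hω.2]

lemma acc_facts (hPS : IsPMF PS) (hℓ : 0 ≤ ℓ) (hγ : 0 < γ n) (hn : 1 ≤ n)
    (hc : ℓ = 0 ∨ γ n < ℓ) :
    (PimpXB PS 𝒰 f ℓ γ n ≤ (2:ℝ) ^ (-(n * (ℓ - γ n))) ∧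
      ∀ xy ∈ AccB PS 𝒰 f ℓ γ n, distOf (pn PS 𝒰 n) (YnB f n) xy.2 ≤ PimpXB PS 𝒰 f ℓ γ n) ∧
    (PimpYB PS 𝒰 f ℓ γ n ≤ (2:ℝ) ^ (-(n * (ℓ - γ n))) ∧
      ∀ xy ∈ AccB PS 𝒰 f ℓ γ n, distOf (pn PS 𝒰 n) (XnB f n) xy.1 ≤ PimpYB PS 𝒰 f ℓ γ n) := by
  classical
  have hp := isPMF_p1 𝒰 PS hPS
  have hpn : IsPMF (pn PS 𝒰 n) := ⟨iidp_nonneg (p1 PS 𝒰) hp.1 n, iidp_sum (p1 PS 𝒰) hp.2 n⟩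
  have hn' : (0:ℝ) < n := by exact_mod_cast hn
  set PX := distOf (pn PS 𝒰 n) (XnB f n) with hPX
  set PY := distOf (pn PS 𝒰 n) (YnB f n) with hPY
  set J := distOf (pn PS 𝒰 n) (fun ω => (XnB f n ω, YnB f n ω)) with hJ
  set B : ℝ := (2:ℝ) ^ (-(n * (ℓ - γ n))) with hB
  have hB0 : 0 ≤ B := by positivity
  have hPXp : IsPMF PX := isPMF_distOf _ hpn _
  have hPYp : IsPMF PY := isPMF_distOf _ hpn _
  have hJp : IsPMF J := isPMF_distOf _ hpn _
  have hJX : ∀ x, ∑ y, J (x, y) = PX x := sum_distOf_pair_right _ _ _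
  have hJY : ∀ y, ∑ x, J (x, y) = PY y := sum_distOf_pair_left _ _ _
  set A := AccB PS 𝒰 f ℓ γ n with hA
  have hmem : ∀ xy ∈ A, 0 < PX xy.1 ∧ 0 < PY xy.2 ∧
      ℓ - γ n < Real.logb 2 (J xy / (PX xy.1 * PY xy.2)) / n := by
    intro xy hxy
    rw [hA, AccB, Finset.mem_filter] at hxy
    have h1 := hxy.2.1
    refine ⟨?_, ?_, hxy.2.2⟩
    · exact pos_of_mul_pos_left h1 (hPYp.1 _)
    · exact pos_of_mul_pos_right h1 (hPXp.1 _)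
  set A' := A.map (Equiv.prodComm _ _).toEmbedding with hA'
  have hmem' : ∀ x y, (y, x) ∈ A' ↔ (x, y) ∈ A := by
    intro x y
    simp [hA']
  have rows : (∀ x, ∑ y, (if (x, y) ∈ A then PY y else 0) ≤ B) ∧
      (∀ y, ∑ x, (if (y, x) ∈ A' then PX x else 0) ≤ B) := by
    rcases hc with h0 | h0
    · have hB1 : 1 ≤ B := by
        refine Real.one_le_rpow (by norm_num) ?_
        rw [h0]
        have := mul_pos hn' hγ
        linarith
      constructor
      · intro x
        refine le_trans (Finset.sum_le_sum (g := PY) fun y _ => ?_) (hPYp.2.trans_le hB1)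
        split_ifs
        · exact le_rfl
        · exact hPYp.1 y
      · intro x
        refine le_trans (Finset.sum_le_sum (g := PX) fun y _ => ?_) (hPXp.2.trans_le hB1)
        split_ifs
        · exact le_rfl
        · exact hPXp.1 y
    · have key : ∀ x y, (x, y) ∈ A → PX x * PY y ≤ B * J (x, y) := fun x y h =>
        acc_bound hn (sub_pos.2 h0) (hJp.1 _)
          (mul_pos (hmem _ h).1 (hmem _ h).2.1) (hmem _ h).2.2
      constructor
      · exact row_bound A PX PY (fun x y => J (x, y)) (fun _ _ => hJp.1 _) hJX hPXp.1 B hB0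
          fun x y h => ⟨(hmem _ h).1, key x y h⟩
      · refine row_bound A' PY PX (fun y x => J (x, y)) (fun _ _ => hJp.1 _) hJY hPYp.1 B hB0
          fun y x h => ?_
        rw [hmem'] at h
        exact ⟨(hmem _ h).2.1, by rw [mul_comm]; exact key x y h⟩
  constructor
  · exact imp_bounds A PY hPYp.1 B hB0 (imp_sum_le A PY B rows.1)
  · have := imp_bounds A' PX hPXp.1 B hB0 (imp_sum_le A' PX B rows.2)
    have e : (⨆ Q : {Q : (Fin n → 𝒴) → ℝ // IsPMF Q}, ∑ xy ∈ A', Q.1 xy.1 * PX xy.2)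
        = PimpYB PS 𝒰 f ℓ γ n := by
      unfold PimpYB
      congr 1
      funext Q
      rw [hA', Finset.sum_map]
      exact Finset.sum_congr rfl fun _ _ => mul_comm _ _
    rw [e] at this
    refine ⟨this.1, fun xy hxy => this.2 (xy.2, xy.1) ((hmem' _ _).2 hxy)⟩

end main

open scoped Classical in
/-- under the symbolwise construction, for all `n ≥ 1` the
decoding error probability equals `Pr{(Xⁿ,Yⁿ) ∉ 𝒜ₙ*}`, perfect secrecy
`H(Sⁿ|Xⁿ) = H(Sⁿ|Yⁿ) = H(Sⁿ) = n·H(S)` holds, and `I(Xⁿ;Yⁿ) = n·ℓ`;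
moreover `Pₙᵉ → 0` and the liminf of the impersonation exponents is at least
`ℓ`, so `{(φₙ*,ψₙ*)}` asymptotically realizes a (2,2)-threshold scheme with
correlation level `ℓ`. -/
theorem statement15 {𝒮 𝒳 𝒴 : Type} [Fintype 𝒮] [Fintype 𝒳] [Fintype 𝒴]
    (𝒰 : Type) [Fintype 𝒰] [Nonempty 𝒰]
    (PS : 𝒮 → ℝ) (hPS : IsPMF PS) (ℓ : ℝ) (hℓ : 0 ≤ ℓ)
    (f : 𝒮 × 𝒰 → 𝒳 × 𝒴) (g : 𝒳 × 𝒴 → Option 𝒮)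
    (hHX : condEnt (p1 PS 𝒰) (fun su => su.1) (fun su => (f su).1)
      = entRV (p1 PS 𝒰) (fun su => su.1))
    (hHY : condEnt (p1 PS 𝒰) (fun su => su.1) (fun su => (f su).2)
      = entRV (p1 PS 𝒰) (fun su => su.1))
    (hHXY : condEnt (p1 PS 𝒰) (fun su => su.1) f = 0)
    (hMI : MI (p1 PS 𝒰) (fun su => (f su).1) (fun su => (f su).2) = ℓ)
    (hg : ∀ s u, 0 < PS s → g (f (s, u)) = some s)
    (hg' : ∀ xy, (∀ su, f su ≠ xy) → g xy = none)
    (γ : ℕ → ℝ) (hγ : ∀ n, 0 < γ n) (hγ0 : Tendsto γ atTop (nhds 0))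
    (hγtop : Tendsto (fun n : ℕ => Real.sqrt (n : ℝ) * γ n) atTop atTop) :
    (∀ n, 1 ≤ n →
      PeB PS 𝒰 f g ℓ γ n =
        ∑ ω ∈ Finset.univ.filter (fun ω : Fin n → 𝒮 × 𝒰 =>
          (XnB f n ω, YnB f n ω) ∉ AccB PS 𝒰 f ℓ γ n), pn PS 𝒰 n ω ∧
      condEnt (pn PS 𝒰 n) (SnB 𝒰 n) (XnB f n) = entRV (pn PS 𝒰 n) (SnB 𝒰 n) ∧
      condEnt (pn PS 𝒰 n) (SnB 𝒰 n) (YnB f n) = entRV (pn PS 𝒰 n) (SnB 𝒰 n) ∧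
      entRV (pn PS 𝒰 n) (SnB 𝒰 n) = (n : ℝ) * ent PS ∧
      MI (pn PS 𝒰 n) (XnB f n) (YnB f n) = (n : ℝ) * ℓ) ∧
    Tendsto (fun n => PeB PS 𝒰 f g ℓ γ n) atTop (nhds 0) ∧
    ℓ ≤ liminf (fun n => min (-Real.logb 2 (PimpXB PS 𝒰 f ℓ γ n) / (n : ℝ))
        (-Real.logb 2 (PimpYB PS 𝒰 f ℓ γ n) / (n : ℝ))) atTop ∧
    Tendsto (fun n => MI (pn PS 𝒰 n) (SnB 𝒰 n) (XnB f n) / (n : ℝ)) atTop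
      (nhds 0) ∧
    Tendsto (fun n => MI (pn PS 𝒰 n) (SnB 𝒰 n) (YnB f n) / (n : ℝ)) atTop
      (nhds 0) ∧
    Tendsto (fun n => MI (pn PS 𝒰 n) (XnB f n) (YnB f n) / (n : ℝ)) atTop
      (nhds ℓ) := by
  have hp := isPMF_p1 𝒰 PS hPS
  have hS : ∀ n, entRV (pn PS 𝒰 n) (SnB 𝒰 n) = n * entRV (p1 PS 𝒰) (fun su => su.1) :=
    fun n => entRV_iidp (p1 PS 𝒰) hp.2 (fun su => su.1) n
  have hX : ∀ n, entRV (pn PS 𝒰 n) (XnB f n) = n * entRV (p1 PS 𝒰) (fun su => (f su).1) :=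
    fun n => entRV_iidp (p1 PS 𝒰) hp.2 (fun su => (f su).1) n
  have hY : ∀ n, entRV (pn PS 𝒰 n) (YnB f n) = n * entRV (p1 PS 𝒰) (fun su => (f su).2) :=
    fun n => entRV_iidp (p1 PS 𝒰) hp.2 (fun su => (f su).2) n
  have hSX : ∀ n, entRV (pn PS 𝒰 n) (fun ω => (SnB 𝒰 n ω, XnB f n ω))
      = n * entRV (p1 PS 𝒰) (fun su => (su.1, (f su).1)) :=
    fun n => entRV_iidp_pair (p1 PS 𝒰) hp.2 (fun su => su.1) (fun su => (f su).1) n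
  have hSY : ∀ n, entRV (pn PS 𝒰 n) (fun ω => (SnB 𝒰 n ω, YnB f n ω))
      = n * entRV (p1 PS 𝒰) (fun su => (su.1, (f su).2)) :=
    fun n => entRV_iidp_pair (p1 PS 𝒰) hp.2 (fun su => su.1) (fun su => (f su).2) n
  have hXY : ∀ n, entRV (pn PS 𝒰 n) (fun ω => (XnB f n ω, YnB f n ω))
      = n * entRV (p1 PS 𝒰) (fun su => ((f su).1, (f su).2)) :=
    fun n => entRV_iidp_pair (p1 PS 𝒰) hp.2 (fun su => (f su).1) (fun su => (f su).2) n
  have hS1 : entRV (p1 PS 𝒰) (fun su => su.1) = ent PS := by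
    unfold entRV
    rw [distOf_p1_fst]
  have cX : ∀ n, condEnt (pn PS 𝒰 n) (SnB 𝒰 n) (XnB f n) = entRV (pn PS 𝒰 n) (SnB 𝒰 n) := by
    intro n
    unfold condEnt at hHX ⊢
    rw [hSX, hX, hS, ← hHX]; ring
  have cY : ∀ n, condEnt (pn PS 𝒰 n) (SnB 𝒰 n) (YnB f n) = entRV (pn PS 𝒰 n) (SnB 𝒰 n) := by
    intro n
    unfold condEnt at hHY ⊢
    rw [hSY, hY, hS, ← hHY]; ring
  have mXY : ∀ n, MI (pn PS 𝒰 n) (XnB f n) (YnB f n) = (n : ℝ) * ℓ := by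
    intro n
    unfold MI at hMI ⊢
    rw [hXY, hX, hY, ← hMI]; ring
  have mSX : ∀ n, MI (pn PS 𝒰 n) (SnB 𝒰 n) (XnB f n) = 0 := by
    intro n
    have := cX n
    unfold condEnt at this
    unfold MI
    linarith
  have mSY : ∀ n, MI (pn PS 𝒰 n) (SnB 𝒰 n) (YnB f n) = 0 := by
    intro n
    have := cY n
    unfold condEnt at this
    unfold MI
    linarith
  have hPe : ∀ n, _ := fun n => PeB_eq 𝒰 PS ℓ f γ n hPS g hg
  have hPe0 : Tendsto (fun n => PeB PS 𝒰 f g ℓ γ n) atTop (nhds 0) := by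
    have hlim : Tendsto (fun n : ℕ =>
        (∑ a, p1 PS 𝒰 a * (infoD (p1 PS 𝒰) (fun su => (f su).1) (fun su => (f su).2) a - ℓ)^2)
        / (Real.sqrt n * γ n)^2) atTop (nhds 0) :=
      ((tendsto_pow_atTop two_ne_zero).comp hγtop).const_div_atTop _
    refine squeeze_zero' (Eventually.of_forall fun n => ?_) ?_ hlim
    · rw [hPe]
      exact Finset.sum_nonneg fun ω _ => iidp_nonneg (p1 PS 𝒰) hp.1 n ω
    · filter_upwards [eventually_ge_atTop 1] with n hn
      rw [hPe]
      exact err_le 𝒰 PS ℓ f γ n hPS hn (hγ n) hMI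
  refine ⟨fun n _ => ⟨hPe n, cX n, cY n, by rw [hS, hS1], mXY n⟩, hPe0, ?_, ?_, ?_, ?_⟩
  · obtain ⟨cx, hcx, hcx'⟩ := exists_pos_lb (distOf (p1 PS 𝒰) (fun su => (f su).1))
    obtain ⟨cy, hcy, hcy'⟩ := exists_pos_lb (distOf (p1 PS 𝒰) (fun su => (f su).2))
    have hcase : ∀ᶠ n in atTop, ℓ = 0 ∨ γ n < ℓ := by
      rcases hℓ.eq_or_lt with h | h
      · exact Eventually.of_forall fun n => Or.inl h.symm
      · exact (hγ0.eventually_lt_const h).mono fun n hn => Or.inr hn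
    have hmain : ∀ᶠ n : ℕ in atTop,
        ℓ - γ n ≤ min (-Real.logb 2 (PimpXB PS 𝒰 f ℓ γ n) / (n : ℝ))
          (-Real.logb 2 (PimpYB PS 𝒰 f ℓ γ n) / (n : ℝ)) ∧
        min (-Real.logb 2 (PimpXB PS 𝒰 f ℓ γ n) / (n : ℝ))
          (-Real.logb 2 (PimpYB PS 𝒰 f ℓ γ n) / (n : ℝ)) ≤ -Real.logb 2 cy := by
      filter_upwards [hcase, eventually_ge_atTop 1, hPe0.eventually_lt_const one_pos]
        with n hc hn hlt
      obtain ⟨⟨x1, x2⟩, ⟨y1, y2⟩⟩ := acc_facts 𝒰 PS ℓ f γ n hPS hℓ (hγ n) hn hc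
      have hne : (AccB PS 𝒰 f ℓ γ n).Nonempty := by
        by_contra hne
        rw [Finset.not_nonempty_iff_eq_empty] at hne
        rw [hPe, hne] at hlt
        have h1 : ∑ ω, pn PS 𝒰 n ω = 1 := iidp_sum (p1 PS 𝒰) hp.2 n
        simp [h1] at hlt
      obtain ⟨⟨x, y⟩, hxy⟩ := hne
      have hpos : 0 < distOf (pn PS 𝒰 n) (XnB f n) x * distOf (pn PS 𝒰 n) (YnB f n) y := by
        rw [AccB, Finset.mem_filter] at hxy
        exact hxy.2.1
      have eX : distOf (pn PS 𝒰 n) (XnB f n) x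
          = iidp (distOf (p1 PS 𝒰) (fun su => (f su).1)) n x :=
        distOf_iidp (p1 PS 𝒰) (fun su => (f su).1) n x
      have eY : distOf (pn PS 𝒰 n) (YnB f n) y
          = iidp (distOf (p1 PS 𝒰) (fun su => (f su).2)) n y :=
        distOf_iidp (p1 PS 𝒰) (fun su => (f su).2) n y
      have nX := distOf_nonneg (p1 PS 𝒰) hp.1 (fun su => (f su).1)
      have nY := distOf_nonneg (p1 PS 𝒰) hp.1 (fun su => (f su).2)
      rw [eX, eY] at hpos
      have pX := pos_of_mul_pos_left hpos (iidp_nonneg _ nY n y)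
      have pY := pos_of_mul_pos_right hpos (iidp_nonneg _ nX n x)
      have lX := (prod_pos_lb _ nX cx hcx hcx' n x pX).trans (eX.symm.le.trans (y2 _ hxy))
      have lY := (prod_pos_lb _ nY cy hcy hcy' n y pY).trans (eY.symm.le.trans (x2 _ hxy))
      have b1 := exponent_bounds n hn _ cy _ hcy lY x1
      have b2 := exponent_bounds n hn _ cx _ hcx lX y1
      exact ⟨le_min b1.1 b2.1, (min_le_left _ _).trans b1.2⟩
    refine le_of_forall_sub_le fun ε hε => ?_
    refine le_liminf_of_le ?_ ?_
    · exact IsBoundedUnder.isCoboundedUnder_ge ⟨_, hmain.mono fun n hn => hn.2⟩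
    · filter_upwards [hmain, hγ0.eventually_lt_const hε] with n h1 h2
      linarith [h1.1]
  · simp [mSX]
  · simp [mSY]
  · refine tendsto_const_nhds.congr' ?_
    filter_upwards [eventually_ge_atTop 1] with n hn
    have hn' : (n:ℝ) ≠ 0 := by positivity
    rw [mXY, mul_div_cancel_left₀ _ hn']
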